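/- Let x ≥ 0 be a real number and let ξ be any integer-valued, square-integrable random variable on a probability space (Ω, F, P) with E[ξ] = x. Then E[(ξ − x)²] ≥ {x}(1 − {x}), where {x} = x − ⌊x⌋ is the fractional part of x. Consequently, the two-point random variable taking the values ⌊x⌋ and ⌊x⌋+1 with probabilities 1 − {x} and {x} has minimal variance among all integer-valued random variables with mean x. -/

import Mathlib

open MeasureTheory

open ProbabilityTheory

/-!
Translating `ξ` by `-⌊E[ξ]⌋` keeps its variance and replaces its mean by the fractional part `p`.
An integer-valued `Y` satisfies `Y ≤ Y²`, so `Var Y = E[Y²] - p² ≥ p - p²` when `E[Y] = p`.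
Equality in `Y ≤ Y²` holds exactly for the values `0` and `1`, which is why the two-point law on
`⌊E[ξ]⌋` and `⌊E[ξ]⌋ + 1` is the minimizer.
-/

section

variable {Ω : Type*} [MeasurableSpace Ω] {P : Measure Ω} [IsProbabilityMeasure P]

theorem integral_mul_one_sub_integral_le_variance {Y : Ω → ℝ} (hY : MemLp Y 2 P)
    (h_le_sq : Y ≤ᵐ[P] Y ^ 2) :
    P[Y] * (1 - P[Y]) ≤ Var[Y; P] := by
  have mean_le_second_moment : P[Y] ≤ P[Y ^ 2] :=
    integral_mono_ae (hY.integrable one_le_two) hY.integrable_sq h_le_sq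
  calc
    (P[Y] * (1 - P[Y]) : ℝ) = P[Y] - P[Y] ^ 2 := by ring
    _ ≤ (P[Y ^ 2] - P[Y] ^ 2 : ℝ) := by gcongr
    _ = Var[Y; P] := (variance_eq_sub hY).symm

theorem integral_sub_floor_integral {X : Ω → ℝ} (hX : Integrable X P) :
    ∫ ω, (X ω - ⌊P[X]⌋) ∂P = Int.fract P[X] := by
  rw [integral_sub hX (integrable_const _), integral_const, probReal_univ, one_smul,
    Int.self_sub_floor]

theorem tbba_minimal_variance_general {ξ : Ω → ℤ} (hξ : MemLp (fun ω => (ξ ω : ℝ)) 2 P) :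
    Int.fract (∫ ω, (ξ ω : ℝ) ∂P) * (1 - Int.fract (∫ ω, (ξ ω : ℝ) ∂P)) ≤
      Var[fun ω => (ξ ω : ℝ); P] := by
  set m : ℤ := ⌊∫ ω, (ξ ω : ℝ) ∂P⌋
  have shift_le_sq (ω : Ω) : (ξ ω : ℝ) - m ≤ ((ξ ω : ℝ) - m) ^ 2 := by
    exact_mod_cast Int.le_self_sq (ξ ω - m)
  rw [← integral_sub_floor_integral (hξ.integrable one_le_two),
    ← variance_sub_const hξ.aestronglyMeasurable (m : ℝ)]
  exact integral_mul_one_sub_integral_le_variance (hξ.sub (memLp_const (m : ℝ)))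
    (.of_forall shift_le_sq)

end

/-- Minimal-variance property of the TBBA offspring law: any integer-valued
square-integrable random variable `ξ` with mean `x ≥ 0` satisfies
`E[(ξ - x)²] ≥ {x}(1 - {x})`, the variance of the two-point TBBA random variable
taking values `⌊x⌋` and `⌊x⌋ + 1` with probabilities `1 - {x}` and `{x}`. -/
theorem tbba_minimal_variance
    {Ω : Type*} [MeasurableSpace Ω] (P : Measure Ω) [IsProbabilityMeasure P]
    (x : ℝ) (hx : 0 ≤ x) (ξ : Ω → ℤ) (hξ : Measurable ξ)
    (hL2 : MemLp (fun ω => (ξ ω : ℝ)) 2 P)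
    (hmean : (∫ ω, (ξ ω : ℝ) ∂P) = x) :
    Int.fract x * (1 - Int.fract x) ≤ ∫ ω, ((ξ ω : ℝ) - x) ^ 2 ∂P := by
  simpa only [variance_eq_integral hL2.aemeasurable, hmean] using
    tbba_minimal_variance_general hL2
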